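/- Let (ρ, u) be a weak solution of the stationary isentropic Navier–Stokes system on ℝ³ with exponent γ satisfying 3 ≤ γ < 6 and potential G ∈ D₀^{1, 6γ/(5γ−6)}(ℝ³). If ρ ∈ L^γ(ℝ³), then ρ ∈ L^{2γ}(ℝ³). -/

import Mathlib

noncomputable section

open MeasureTheory Metric Filter Topology Set

/-- Three-dimensional Euclidean space. -/
abbrev E3 : Type := EuclideanSpace ℝ (Fin 3)

/-- Partial derivative of a scalar function in the `i`-th coordinate direction. -/
def pd (f : E3 → ℝ) (i : Fin 3) : E3 → ℝ :=
  fun x => fderiv ℝ f x (EuclideanSpace.single i 1)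

/-- Classical gradient matrix of a vector field: `(tgrad φ x) i j = ∂_j φ_i (x)`. -/
def tgrad (φ : E3 → Fin 3 → ℝ) (x : E3) : Fin 3 → Fin 3 → ℝ :=
  fun i j => pd (fun y => φ y i) j x

/-- Smooth compactly supported scalar test function with support in `Ω`. -/
def IsTest (Ω : Set E3) (φ : E3 → ℝ) : Prop :=
  ContDiff ℝ ((⊤ : ℕ∞) : WithTop ℕ∞) φ ∧ HasCompactSupport φ ∧ tsupport φ ⊆ Ω

/-- `C^n` compactly supported vector-valued test function with support in `Ω`. -/
def IsTestVec (n : WithTop ℕ∞) (Ω : Set E3) (φ : E3 → Fin 3 → ℝ) : Prop :=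
  ContDiff ℝ n φ ∧ HasCompactSupport φ ∧ tsupport φ ⊆ Ω

/-- The Newtonian viscous stress tensor
`S(M) = μ (M + Mᵗ - (2/3) (tr M) I) + η (tr M) I`. -/
def Smat (μ η : ℝ) (M : Fin 3 → Fin 3 → ℝ) : Fin 3 → Fin 3 → ℝ :=
  fun i j =>
    μ * (M i j + M j i - (2 / 3) * (∑ k, M k k) * (if i = j then (1 : ℝ) else 0))
      + η * (∑ k, M k k) * (if i = j then (1 : ℝ) else 0)

/-- `dG` is the weak gradient of the scalar function `G` on `Ω`. -/
def HasWeakGradOn (Ω : Set E3) (G : E3 → ℝ) (dG : E3 → Fin 3 → ℝ) : Prop :=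
  ∀ φ : E3 → ℝ, IsTest Ω φ → ∀ i : Fin 3,
    ∫ x in Ω, G x * pd φ i x = - ∫ x in Ω, dG x i * φ x

/-- `du` is the weak gradient (Jacobian) of the vector field `u` on `Ω`. -/
def HasWeakGradVecOn (Ω : Set E3) (u : E3 → Fin 3 → ℝ) (du : E3 → Fin 3 → Fin 3 → ℝ) : Prop :=
  ∀ φ : E3 → ℝ, IsTest Ω φ → ∀ i j : Fin 3,
    ∫ x in Ω, u x i * pd φ j x = - ∫ x in Ω, du x i j * φ x

/-- `u ∈ D₀^{1,2}(Ω; ℝ³)` with weak gradient `du`: `u` is locally integrable on `Ω`, its weak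
gradient belongs to `L²(Ω)`, and `u` can be approximated by smooth compactly supported fields
`uₙ` with `∇uₙ → ∇u` in `L²(Ω)` and `uₙ → u` in `L⁶(Ω)`. -/
def MemD012 (Ω : Set E3) (u : E3 → Fin 3 → ℝ) (du : E3 → Fin 3 → Fin 3 → ℝ) : Prop :=
  LocallyIntegrableOn u Ω volume ∧
  HasWeakGradVecOn Ω u du ∧
  MemLp du 2 (volume.restrict Ω) ∧
  ∃ un : ℕ → E3 → Fin 3 → ℝ,
    (∀ n, IsTestVec ((⊤ : ℕ∞) : WithTop ℕ∞) Ω (un n)) ∧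
    Tendsto (fun n => eLpNorm (fun x => tgrad (un n) x - du x) 2 (volume.restrict Ω))
      atTop (𝓝 0) ∧
    Tendsto (fun n => eLpNorm (fun x => un n x - u x) 6 (volume.restrict Ω)) atTop (𝓝 0)

/-- `G ∈ D₀^{1,q}(Ω)` with weak gradient `dG`. -/
def MemD01q (Ω : Set E3) (G : E3 → ℝ) (dG : E3 → Fin 3 → ℝ) (q : ℝ) : Prop :=
  HasWeakGradOn Ω G dG ∧
  MemLp dG (ENNReal.ofReal q) (volume.restrict Ω) ∧
  ∃ Gn : ℕ → E3 → ℝ,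
    (∀ n, IsTest Ω (Gn n)) ∧
    Tendsto (fun n =>
        eLpNorm (fun x => (fun i => pd (Gn n) i x) - dG x) (ENNReal.ofReal q)
          (volume.restrict Ω)) atTop (𝓝 0) ∧
    ∀ K : Set E3, IsCompact K → K ⊆ Ω →
      Tendsto (fun n => ∫ x in K, |Gn n x - G x|) atTop (𝓝 0)

/-- `G ∈ W^{1,∞}(Ω)` with weak gradient `dG`: both `G` and `∇G` are essentially bounded. -/
def MemW1inf (Ω : Set E3) (G : E3 → ℝ) (dG : E3 → Fin 3 → ℝ) : Prop :=
  HasWeakGradOn Ω G dG ∧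
  MemLp G ⊤ (volume.restrict Ω) ∧ MemLp dG ⊤ (volume.restrict Ω)

/-- Weak solution `(ρ, u)` (with weak gradient `du` of `u` and weak gradient `dG` of `G`) of the
stationary barotropic Navier–Stokes system
`div(ρu) = 0`, `div(ρ u⊗u) + ∇p(ρ) − div S(∇u) = ρ∇G` on `Ω` with no-slip boundary condition. -/
structure WeakSolution (Ω : Set E3) (μ η : ℝ) (p : ℝ → ℝ)
    (G : E3 → ℝ) (dG : E3 → Fin 3 → ℝ)
    (ρ : E3 → ℝ) (u : E3 → Fin 3 → ℝ) (du : E3 → Fin 3 → Fin 3 → ℝ) : Prop where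
  aemeas_ρ : AEMeasurable ρ volume
  aemeas_u : AEMeasurable u volume
  weakGrad_G : HasWeakGradOn Ω G dG
  ρ_nonneg : ∀ᵐ x ∂(volume.restrict Ω), 0 ≤ ρ x
  ρu_locInt : LocallyIntegrableOn (fun x => fun i => ρ x * u x i) (closure Ω) volume
  mass : ∀ φ : E3 → ℝ, ContDiff ℝ ((⊤ : ℕ∞) : WithTop ℕ∞) φ → HasCompactSupport φ →
    ∫ x in Ω, ρ x * (∑ i, u x i * pd φ i x) = 0
  ρ_locInt : LocallyIntegrableOn ρ Ω volume
  ρu2_locInt : LocallyIntegrableOn (fun x => ρ x * (∑ i, (u x i) ^ 2)) Ω volume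
  pρ_locInt : LocallyIntegrableOn (fun x => p (ρ x)) Ω volume
  ρdG_locInt : LocallyIntegrableOn (fun x => fun i => ρ x * dG x i) Ω volume
  u_D012 : MemD012 Ω u du
  momentum : ∀ φ : E3 → Fin 3 → ℝ, IsTestVec 1 Ω φ →
    ∫ x in Ω, ((∑ i, ∑ j, ρ x * u x i * u x j * tgrad φ x i j)
        + p (ρ x) * (∑ i, tgrad φ x i i))
      = (∫ x in Ω, ∑ i, ∑ j, Smat μ η (du x) i j * tgrad φ x i j)
        - ∫ x in Ω, ∑ i, ρ x * dG x i * φ x i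

/-- Weak solution of the stationary isentropic Navier–Stokes system on `ℝ³`
with pressure `p(ρ) = ρ^γ`. -/
def IsentropicWeakSolution (μ η γ : ℝ) (G : E3 → ℝ) (dG : E3 → Fin 3 → ℝ)
    (ρ : E3 → ℝ) (u : E3 → Fin 3 → ℝ) (du : E3 → Fin 3 → Fin 3 → ℝ) : Prop :=
  WeakSolution univ μ η (fun s => s ^ γ) G dG ρ u du

/-- The `L^r` norm of a scalar function on a set. -/
def lpNormOn (f : E3 → ℝ) (r : ℝ) (s : Set E3) : ℝ :=
  (∫ x in s, |f x| ^ r) ^ (1 / r)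

/-- Euclidean norm of a vector in `ℝ³` (represented as `Fin 3 → ℝ`). -/
def vnorm (v : Fin 3 → ℝ) : ℝ := Real.sqrt (∑ i, (v i) ^ 2)

/-- The `L^r` norm of a vector field on a set. -/
def vecLpNormOn (u : E3 → Fin 3 → ℝ) (r : ℝ) (s : Set E3) : ℝ :=
  (∫ x in s, (vnorm (u x)) ^ r) ^ (1 / r)

/-- The exponent `f(α, γ)` from the higher-integrability propositions. -/
def fExp (α γ : ℝ) : ℝ :=
  if 6 ≤ γ then
    (if (2 * γ - 3) / (γ * (γ - 1)) ≤ α then α - 3 / (2 * γ)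
     else α / γ + 1 / (2 * γ) - 3 / γ ^ 2)
  else
    (if 3 / (2 * (γ - 1)) ≤ α then α - 3 / (2 * γ)
     else if 1 / (2 * (γ - 1)) ≤ α then α / γ
     else α / γ ^ 2 + 1 / (2 * γ ^ 2))

/-- The exponent `g(α, β, γ)`. -/
def gExp (α β γ : ℝ) : ℝ :=
  if fExp α γ ≤ (γ - 3) / (γ * (3 * γ - 5)) then
    γ * (1 - fExp α γ) * (6 - β) / (3 * β * (γ - 1))
  else (1 - γ * fExp α γ) * (6 - β) / (2 * β)

/-!
Testing the momentum equation with `∇ψ` turns it into an identity for `Δp`, where `p = ρ^γ`: the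
convective term becomes `∫ ρ u⊗u : D²ψ`, the viscous one `∫ S : D²ψ`, and the force `∫ ρ∇G · ∇ψ`.
Young's inequality and `ρ³ ≤ ρ^{γ/2} + ρ^γ` give `ρ|u|² ≤ p/3 + h` with
`h = ρ^{γ/2}/3 + 2|u|³/3 ∈ L²`. Since `‖D²ψ‖₂ = ‖Δψ‖₂`, and since the Sobolev inequality bounds
`‖∇ψ‖₆` by the same quantity, `|∫ p Δψ| ≤ (1/3) ∫ p |D²ψ| + K ‖Δψ‖₂` for all test functions.

This estimate survives mollification of `p`, which brings `p` into `L²`. The Laplacians of test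
functions are dense in `L²`, because an `L²` function orthogonal to all of them is harmonic and
hence zero, so duality gives `‖p‖₂ ≤ ‖p‖₂/3 + K` for the mollified `p`. The term `‖p‖₂/3` is
absorbed, and Fatou's lemma removes the mollification.
-/

open scoped ContDiff Convolution ENNReal InnerProductSpace Laplacian NNReal

section HolderInequality

variable {α F F' : Type*} [MeasurableSpace α] {μ : Measure α} [NormedAddCommGroup F]
  [NormedAddCommGroup F'] {p q : ℝ≥0∞} [p.HolderConjugate q] {f : α → F} {g : α → F'}

theorem integrable_norm_mul_norm (hf : MemLp f p μ) (hg : MemLp g q μ) :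
    Integrable (fun x => ‖f x‖ * ‖g x‖) μ :=
  hf.norm.integrable_mul hg.norm

theorem integral_norm_mul_norm_le_lpNorm_mul_lpNorm (hf : MemLp f p μ) (hg : MemLp g q μ) :
    ∫ x, ‖f x‖ * ‖g x‖ ∂μ ≤ lpNorm f p μ * lpNorm g q μ := by
  have holder : eLpNorm (fun x => ‖f x‖ * ‖g x‖) 1 μ ≤ eLpNorm f p μ * eLpNorm g q μ := by
    simpa only [smul_eq_mul, eLpNorm_norm, Pi.mul_def] using
      eLpNorm_smul_le_mul_eLpNorm (r := 1) hg.1.norm hf.1.norm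
  calc ∫ x, ‖f x‖ * ‖g x‖ ∂μ = (eLpNorm (fun x => ‖f x‖ * ‖g x‖) 1 μ).toReal := by
        have hmeas := (integrable_norm_mul_norm hf hg).1
        rw [toReal_eLpNorm hmeas, lpNorm_one_eq_integral_norm hmeas]
        simp
    _ ≤ (eLpNorm f p μ * eLpNorm g q μ).toReal :=
        ENNReal.toReal_mono (ENNReal.mul_ne_top hf.2.ne hg.2.ne) holder
    _ = lpNorm f p μ * lpNorm g q μ := by
        rw [ENNReal.toReal_mul, toReal_eLpNorm hf.1, toReal_eLpNorm hg.1]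

end HolderInequality

theorem lpNorm_two_sq {α F : Type*} [MeasurableSpace α] {μ : Measure α} [NormedAddCommGroup F]
    {f : α → F} (hf : AEStronglyMeasurable f μ) : lpNorm f 2 μ ^ 2 = ∫ x, ‖f x‖ ^ 2 ∂μ := by
  rw [lpNorm_eq_integral_norm_rpow_toReal two_ne_zero ENNReal.ofNat_ne_top hf,
    ← Real.rpow_natCast, ← Real.rpow_mul (integral_nonneg fun _ => by positivity)]
  simp

/-- Smooth compactly supported real functions, the test functions of distribution theory. -/
structure IsTestFunction {E : Type*} [NormedAddCommGroup E] [NormedSpace ℝ E] (f : E → ℝ) :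
    Prop where
  contDiff : ContDiff ℝ ∞ f
  hasCompactSupport : HasCompactSupport f

namespace IsTestFunction

variable {E : Type*} [NormedAddCommGroup E] [NormedSpace ℝ E] {f g : E → ℝ}

protected theorem continuous (hf : IsTestFunction f) : Continuous f := hf.contDiff.continuous

protected theorem zero : IsTestFunction (0 : E → ℝ) := ⟨contDiff_const, .zero⟩

protected theorem add (hf : IsTestFunction f) (hg : IsTestFunction g) : IsTestFunction (f + g) :=
  ⟨hf.contDiff.add hg.contDiff, hf.hasCompactSupport.add hg.hasCompactSupport⟩

protected theorem const_smul (c : ℝ) (hf : IsTestFunction f) : IsTestFunction (c • f) :=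
  ⟨hf.contDiff.const_smul c, hf.hasCompactSupport.smul_left⟩

theorem comp_const_smul (hf : IsTestFunction f) {c : ℝ} (hc : c ≠ 0) :
    IsTestFunction fun x => f (c • x) :=
  ⟨hf.contDiff.comp (contDiff_const_smul c),
    hf.hasCompactSupport.comp_homeomorph (Homeomorph.smulOfNeZero c hc)⟩

protected theorem memLp [MeasurableSpace E] [OpensMeasurableSpace E] [SecondCountableTopology E]
    {μ : Measure E} [IsFiniteMeasureOnCompacts μ] (hf : IsTestFunction f) (p : ℝ≥0∞) :
    MemLp f p μ :=
  hf.continuous.memLp_of_hasCompactSupport hf.hasCompactSupport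

theorem memLp_fderiv [FiniteDimensional ℝ E] [MeasurableSpace E] [OpensMeasurableSpace E]
    {μ : Measure E} [IsFiniteMeasureOnCompacts μ] (hf : IsTestFunction f) (p : ℝ≥0∞) :
    MemLp (fderiv ℝ f) p μ :=
  (hf.contDiff.continuous_fderiv (by simp)).memLp_of_hasCompactSupport
    (hf.hasCompactSupport.fderiv (𝕜 := ℝ))

theorem integrable_mul [MeasurableSpace E] [OpensMeasurableSpace E] [SecondCountableTopology E]
    {μ : Measure E} [IsFiniteMeasureOnCompacts μ] (hf : IsTestFunction f) (hg : Continuous g) :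
    Integrable (fun x => g x * f x) μ :=
  (hg.mul hf.continuous).integrable_of_hasCompactSupport hf.hasCompactSupport.mul_left

end IsTestFunction

theorem laplacian_comp_const_smul {E : Type*} [NormedAddCommGroup E] [InnerProductSpace ℝ E]
    [FiniteDimensional ℝ E] {f : E → ℝ} (hf : ContDiff ℝ 2 f) (c : ℝ) (x : E) :
    Δ (fun y => f (c • y)) x = c ^ 2 * Δ f (c • x) := by
  have hf2 : ContDiff ℝ (2 : ℕ) f := hf
  simp [InnerProductSpace.laplacian_eq_iteratedFDeriv_stdOrthonormalBasis,
    iteratedFDeriv_comp_const_smul c hf2, Finset.mul_sum]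

theorem fderiv_fderiv_apply {E : Type*} [NormedAddCommGroup E] [NormedSpace ℝ E] {f : E → ℝ}
    (hf : ContDiff ℝ ∞ f) (x v w : E) :
    fderiv ℝ (fun y => fderiv ℝ f y v) x w = fderiv ℝ (fderiv ℝ f) x w v := by
  have hdiff : DifferentiableAt ℝ (fderiv ℝ f) x :=
    (hf.fderiv_right (m := ∞) (by simp)).differentiable (by simp) x
  simp [fderiv_clm_apply hdiff (differentiableAt_const v)]

variable {ι : Type*} [Fintype ι]

section Derivatives

/-- The partial derivative `∂ᵢ f`. -/
def partialDeriv (i : ι) (f : EuclideanSpace ℝ ι → ℝ) (x : EuclideanSpace ℝ ι) : ℝ :=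
  fderiv ℝ f x (EuclideanSpace.basisFun ι ℝ i)

/-- The Hessian `D²f`, with `(i, j)` entry `∂ⱼ ∂ᵢ f`. It takes values in a Euclidean space, so that
`‖hessian f x‖` is the Frobenius norm and `⟪T, hessian f x⟫_ℝ` the contraction `T : D²f`. -/
def hessian (f : EuclideanSpace ℝ ι → ℝ) (x : EuclideanSpace ℝ ι) : EuclideanSpace ℝ (ι × ι) :=
  WithLp.toLp 2 fun ij => partialDeriv ij.2 (partialDeriv ij.1 f) x

variable {f g : EuclideanSpace ℝ ι → ℝ}

theorem sum_smul_basisFun (v : EuclideanSpace ℝ ι) :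
    ∑ i, v i • EuclideanSpace.basisFun ι ℝ i = v :=
  (EuclideanSpace.basisFun ι ℝ).sum_repr v

theorem fderiv_apply_eq_sum_partialDeriv (f : EuclideanSpace ℝ ι → ℝ) (x v : EuclideanSpace ℝ ι) :
    fderiv ℝ f x v = ∑ i, v i * partialDeriv i f x := by
  conv_lhs => rw [← sum_smul_basisFun v]
  simp only [map_sum, map_smul, smul_eq_mul, partialDeriv]

theorem contDiff_partialDeriv (hf : ContDiff ℝ ∞ f) (i : ι) : ContDiff ℝ ∞ (partialDeriv i f) :=
  (hf.fderiv_right (m := ∞) (by simp)).clm_apply contDiff_const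

protected theorem IsTestFunction.partialDeriv (hf : IsTestFunction f) (i : ι) :
    IsTestFunction (partialDeriv i f) :=
  ⟨contDiff_partialDeriv hf.contDiff i, hf.hasCompactSupport.fderiv_apply (𝕜 := ℝ) _⟩

theorem partialDeriv_partialDeriv_apply (hf : ContDiff ℝ ∞ f) (i j : ι) (x : EuclideanSpace ℝ ι) :
    partialDeriv j (partialDeriv i f) x =
      fderiv ℝ (fderiv ℝ f) x (EuclideanSpace.basisFun ι ℝ j)
        (EuclideanSpace.basisFun ι ℝ i) :=
  fderiv_fderiv_apply hf x _ _

theorem partialDeriv_comm (hf : ContDiff ℝ ∞ f) (i j : ι) :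
    partialDeriv j (partialDeriv i f) = partialDeriv i (partialDeriv j f) := by
  funext x
  rw [partialDeriv_partialDeriv_apply hf, partialDeriv_partialDeriv_apply hf]
  refine (hf.contDiffAt.isSymmSndFDerivAt ?_).eq _ _
  rw [minSmoothness_of_isRCLikeNormedField]
  exact WithTop.coe_le_coe.2 le_top

theorem partialDeriv_const_smul (c : ℝ) (f : EuclideanSpace ℝ ι → ℝ) (i : ι) :
    partialDeriv i (c • f) = c • partialDeriv i f := by
  funext x
  simp [partialDeriv, fderiv_const_smul_field]

theorem partialDeriv_mul (hf : ContDiff ℝ ∞ f) (hg : ContDiff ℝ ∞ g) (i : ι) :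
    partialDeriv i (f * g) = f * partialDeriv i g + partialDeriv i f * g := by
  funext x
  simp [partialDeriv, fderiv_mul (hf.differentiable (by simp) x)
    (hg.differentiable (by simp) x), mul_comm]

theorem laplacian_eq_sum_partialDeriv (hf : ContDiff ℝ ∞ f) :
    Δ f = ∑ i, partialDeriv i (partialDeriv i f) := by
  funext x
  simp [InnerProductSpace.laplacian_eq_iteratedFDeriv_orthonormalBasis f
    (EuclideanSpace.basisFun ι ℝ), partialDeriv_partialDeriv_apply hf, iteratedFDeriv_two_apply]

protected theorem IsTestFunction.laplacian (hf : IsTestFunction f) : IsTestFunction (Δ f) := by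
  rw [laplacian_eq_sum_partialDeriv hf.contDiff]
  exact Finset.sum_induction _ IsTestFunction (fun _ _ => .add) .zero
    fun i _ => (hf.partialDeriv i).partialDeriv i

theorem laplacian_mul_self (hf : ContDiff ℝ ∞ f) :
    Δ (f * f) = (2 : ℝ) • (∑ i, partialDeriv i f ^ 2 + f * Δ f) := by
  have hmul (i : ι) : partialDeriv i (partialDeriv i (f * f)) =
      (2 : ℝ) • (partialDeriv i f ^ 2 + f * partialDeriv i (partialDeriv i f)) := by
    have hsq : partialDeriv i (f * f) = (2 : ℝ) • (f * partialDeriv i f) := by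
      rw [partialDeriv_mul hf hf, mul_comm, two_smul]
    rw [hsq, partialDeriv_const_smul, partialDeriv_mul hf (contDiff_partialDeriv hf i), pow_two,
      add_comm]
  have hff : ContDiff ℝ ∞ (f * f) := hf.mul hf
  simp_rw [laplacian_eq_sum_partialDeriv hff, laplacian_eq_sum_partialDeriv hf, hmul,
    Finset.mul_sum, ← Finset.sum_add_distrib, Finset.smul_sum]

theorem integral_mul_partialDeriv (hf : ContDiff ℝ ∞ f) (hg : IsTestFunction g) (i : ι) :
    ∫ x, f x * partialDeriv i g x = -∫ x, partialDeriv i f x * g x :=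
  integral_mul_fderiv_eq_neg_fderiv_mul_of_integrable
    (hg.integrable_mul (contDiff_partialDeriv hf i).continuous)
    ((hg.partialDeriv i).integrable_mul hf.continuous) (hg.integrable_mul hf.continuous)
    (fun _ _ => hf.differentiable (by simp) _) (fun _ _ => hg.contDiff.differentiable (by simp) _)

theorem integral_mul_laplacian (hf : ContDiff ℝ ∞ f) (hg : IsTestFunction g) :
    ∫ x, f x * Δ g x = ∫ x, Δ f x * g x := by
  simp only [laplacian_eq_sum_partialDeriv hf, laplacian_eq_sum_partialDeriv hg.contDiff,
    Finset.sum_apply, Finset.mul_sum, Finset.sum_mul]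
  rw [integral_finsetSum _ fun i _ =>
      ((hg.partialDeriv i).partialDeriv i).integrable_mul hf.continuous,
    integral_finsetSum _ fun i _ => hg.integrable_mul
      (contDiff_partialDeriv (contDiff_partialDeriv hf i) i).continuous]
  refine Finset.sum_congr rfl fun i _ => ?_
  rw [integral_mul_partialDeriv hf (hg.partialDeriv i),
    integral_mul_partialDeriv (contDiff_partialDeriv hf i) hg, neg_neg]

theorem IsTestFunction.continuous_hessian (hf : IsTestFunction f) : Continuous (hessian f) :=
  (PiLp.continuous_toLp 2 _).comp <|
    continuous_pi fun ij => ((hf.partialDeriv ij.1).partialDeriv ij.2).continuous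

theorem IsTestFunction.hasCompactSupport_hessian (hf : IsTestFunction f) :
    HasCompactSupport (hessian f) := by
  refine ((hf.hasCompactSupport.fderiv ℝ).fderiv ℝ).mono fun x hx hzero => hx ?_
  ext ij
  simp [hessian, partialDeriv_partialDeriv_apply hf.contDiff, hzero]

theorem IsTestFunction.memLp_hessian (hf : IsTestFunction f) (p : ℝ≥0∞) :
    MemLp (hessian f) p volume :=
  hf.continuous_hessian.memLp_of_hasCompactSupport hf.hasCompactSupport_hessian

theorem integral_sq_partialDeriv_partialDeriv (hf : IsTestFunction f) (i j : ι) :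
    ∫ x, partialDeriv j (partialDeriv i f) x ^ 2 =
      ∫ x, partialDeriv i (partialDeriv i f) x * partialDeriv j (partialDeriv j f) x := by
  have hi := hf.partialDeriv i
  have hjj := (hf.partialDeriv j).partialDeriv j
  have third : partialDeriv j (partialDeriv j (partialDeriv i f)) =
      partialDeriv i (partialDeriv j (partialDeriv j f)) := by
    rw [partialDeriv_comm hf.contDiff i j, partialDeriv_comm (hf.partialDeriv j).contDiff i j]
  simp only [pow_two]
  rw [integral_mul_partialDeriv (hi.partialDeriv j).contDiff hi, third,
    ← integral_mul_partialDeriv hjj.contDiff hi]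
  simp only [mul_comm]

theorem lpNorm_hessian_eq_lpNorm_laplacian (hf : IsTestFunction f) :
    lpNorm (hessian f) 2 volume = lpNorm (Δ f) 2 volume := by
  have hsq (i j : ι) : Integrable fun x => partialDeriv j (partialDeriv i f) x ^ 2 :=
    (((hf.partialDeriv i).partialDeriv j).memLp 2).integrable_sq
  have hprod (i j : ι) : Integrable fun x =>
      partialDeriv i (partialDeriv i f) x * partialDeriv j (partialDeriv j f) x :=
    ((hf.partialDeriv j).partialDeriv j).integrable_mul
      ((hf.partialDeriv i).partialDeriv i).continuous
  rw [← sq_eq_sq₀ lpNorm_nonneg lpNorm_nonneg, lpNorm_two_sq (hf.memLp_hessian 2).1,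
    lpNorm_two_sq (hf.laplacian.memLp 2).1]
  calc ∫ x, ‖hessian f x‖ ^ 2
      = ∑ i, ∑ j, ∫ x, partialDeriv j (partialDeriv i f) x ^ 2 := by
        simp only [EuclideanSpace.real_norm_sq_eq, hessian, Fintype.sum_prod_type]
        rw [integral_finsetSum _ fun i _ => integrable_finsetSum _ fun j _ => hsq i j]
        exact Finset.sum_congr rfl fun i _ => integral_finsetSum _ fun j _ => hsq i j
    _ = ∑ i, ∑ j, ∫ x,
          partialDeriv i (partialDeriv i f) x * partialDeriv j (partialDeriv j f) x := by
        simp only [integral_sq_partialDeriv_partialDeriv hf]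
    _ = ∫ x, ‖Δ f x‖ ^ 2 := by
        simp only [laplacian_eq_sum_partialDeriv hf.contDiff, Real.norm_eq_abs,
          Finset.sum_apply, pow_two, abs_mul_abs_self, Finset.sum_mul_sum]
        rw [integral_finsetSum _ fun i _ => integrable_finsetSum _ fun j _ => hprod i j]
        exact Finset.sum_congr rfl fun i _ => (integral_finsetSum _ fun j _ => hprod i j).symm

end Derivatives

section Mollification

variable {E F : Type*} [NormedAddCommGroup E] [NormedSpace ℝ E] [FiniteDimensional ℝ E]
  [MeasurableSpace E] {μ : Measure E} [NormedAddCommGroup F] [NormedSpace ℝ F]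
  {φ : ContDiffBump (0 : E)} {f : E → F}

/-- The convolution of `f` with the smooth probability density proportional to the bump `φ`. -/
def mollify (φ : ContDiffBump (0 : E)) (μ : Measure E) (f : E → F) : E → F :=
  φ.normed μ ⋆[ContinuousLinearMap.lsmul ℝ ℝ, μ] f

theorem mollify_apply (f : E → F) (x : E) :
    mollify φ μ f x = ∫ t, φ.normed μ t • f (x - t) ∂μ :=
  rfl

theorem norm_mollify_le (f : E → F) (x : E) :
    ‖mollify φ μ f x‖ ≤ mollify φ μ (fun y => ‖f y‖) x := by
  simpa only [mollify_apply, norm_smul, Real.norm_of_nonneg (φ.nonneg_normed _), smul_eq_mul] using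
    norm_integral_le_integral_norm (μ := μ) fun t => φ.normed μ t • f (x - t)

variable [BorelSpace E] [μ.IsAddHaarMeasure]

theorem contDiff_mollify {f : E → ℝ} (hf : LocallyIntegrable f μ) :
    ContDiff ℝ ∞ (mollify φ μ f) :=
  φ.hasCompactSupport_normed.contDiff_convolution_left _ φ.contDiff_normed hf

protected theorem IsTestFunction.mollify {f : E → ℝ} (hf : IsTestFunction f) :
    IsTestFunction (mollify φ μ f) :=
  ⟨contDiff_mollify hf.continuous.locallyIntegrable,
    φ.hasCompactSupport_normed.convolution _ hf.hasCompactSupport⟩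

theorem exists_norm_mollify_le (hf : Integrable f μ) : ∃ B, ∀ x, ‖mollify φ μ f x‖ ≤ B := by
  obtain ⟨B, hB⟩ := φ.hasCompactSupport_normed.exists_bound_of_continuous
    (φ.continuous_normed (μ := μ))
  refine ⟨B * ∫ y, ‖f y‖ ∂μ, fun x => ?_⟩
  rw [← integral_sub_left_eq_self (fun y => ‖f y‖) μ x, ← integral_const_mul]
  refine norm_integral_le_of_norm_le ((hf.norm.comp_sub_left x).const_mul B)
    (.of_forall fun t => ?_)
  rw [ContinuousLinearMap.lsmul_apply, norm_smul]
  gcongr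
  exact hB t

theorem lintegral_ofReal_normed_bump :
    ∫⁻ x, ENNReal.ofReal (φ.normed μ x) ∂μ = 1 := by
  rw [← ofReal_integral_eq_lintegral_ofReal φ.integrable_normed
    (.of_forall φ.nonneg_normed), φ.integral_normed, ENNReal.ofReal_one]

theorem enorm_mollify_rpow_le (hf : AEStronglyMeasurable f μ) {p : ℝ} (hp : 1 ≤ p) (x : E) :
    ‖mollify φ μ f x‖ₑ ^ p ≤ ∫⁻ t, ENNReal.ofReal (φ.normed μ t) * ‖f (x - t)‖ₑ ^ p ∂μ := by
  have hw : Measurable fun t => ENNReal.ofReal (φ.normed μ t) :=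
    φ.continuous_normed.measurable.ennreal_ofReal
  let ν := μ.withDensity fun t => ENNReal.ofReal (φ.normed μ t)
  have hν : IsProbabilityMeasure ν :=
    ⟨by rw [withDensity_apply _ .univ, setLIntegral_univ, lintegral_ofReal_normed_bump]⟩
  have hfx : AEStronglyMeasurable (fun t => f (x - t)) μ :=
    hf.comp_quasiMeasurePreserving (quasiMeasurePreserving_sub_left μ x)
  have hfν : AEStronglyMeasurable (fun t => f (x - t)) ν :=
    hfx.mono_ac (withDensity_absolutelyContinuous _ _)
  have hp0 : 0 < p := one_pos.trans_le hp
  have average_le : ‖mollify φ μ f x‖ₑ ≤ eLpNorm (fun t => f (x - t)) 1 ν := by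
    rw [eLpNorm_one_eq_lintegral_enorm,
      lintegral_withDensity_eq_lintegral_mul_non_measurable _ hw (by simp)]
    refine (enorm_integral_le_lintegral_enorm _).trans_eq (lintegral_congr fun t => ?_)
    simp [enorm_smul, Real.enorm_of_nonneg (φ.nonneg_normed t)]
  calc ‖mollify φ μ f x‖ₑ ^ p ≤ eLpNorm (fun t => f (x - t)) (ENNReal.ofReal p) ν ^ p := by
        gcongr
        exact average_le.trans (eLpNorm_le_eLpNorm_of_exponent_le
          (ENNReal.one_le_ofReal.2 hp) hfν)
    _ = ∫⁻ t, ‖f (x - t)‖ₑ ^ p ∂ν := by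
        rw [eLpNorm_eq_lintegral_rpow_enorm_toReal (by simpa using hp0) ENNReal.ofReal_ne_top,
          ENNReal.toReal_ofReal hp0.le, ← ENNReal.rpow_mul, one_div_mul_cancel hp0.ne',
          ENNReal.rpow_one]
    _ = _ := lintegral_withDensity_eq_lintegral_mul_non_measurable _ hw (by simp) _

theorem eLpNorm_mollify_le (hf : AEStronglyMeasurable f μ) {p : ℝ≥0∞} (hp : 1 ≤ p) (hp' : p ≠ ⊤) :
    eLpNorm (mollify φ μ f) p μ ≤ eLpNorm f p μ := by
  have hp0 : p ≠ 0 := (one_pos.trans_le hp).ne'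
  have hp1 : 1 ≤ p.toReal := by simpa using ENNReal.toReal_mono hp' hp
  simp only [eLpNorm_eq_lintegral_rpow_enorm_toReal hp0 hp']
  gcongr ?_ ^ _
  have hfsub : AEStronglyMeasurable (fun xt : E × E => f (xt.1 - xt.2)) (μ.prod μ) :=
    hf.comp_quasiMeasurePreserving (quasiMeasurePreserving_sub_of_right_invariant μ μ)
  have hw : Measurable fun t => ENNReal.ofReal (φ.normed μ t) :=
    φ.continuous_normed.measurable.ennreal_ofReal
  calc ∫⁻ x, ‖mollify φ μ f x‖ₑ ^ p.toReal ∂μ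
      ≤ ∫⁻ x, ∫⁻ t, ENNReal.ofReal (φ.normed μ t) * ‖f (x - t)‖ₑ ^ p.toReal ∂μ ∂μ :=
        lintegral_mono fun x => enorm_mollify_rpow_le hf hp1 x
    _ = ∫⁻ t, ∫⁻ x, ENNReal.ofReal (φ.normed μ t) * ‖f (x - t)‖ₑ ^ p.toReal ∂μ ∂μ :=
        lintegral_lintegral_swap ((hw.comp measurable_snd).aemeasurable.mul
          (hfsub.enorm.pow_const _))
    _ = ∫⁻ t, ENNReal.ofReal (φ.normed μ t) * ∫⁻ x, ‖f x‖ₑ ^ p.toReal ∂μ ∂μ := by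
        refine lintegral_congr fun t => ?_
        rw [lintegral_const_mul' _ _ ENNReal.ofReal_ne_top,
          lintegral_sub_right_eq_self fun x => ‖f x‖ₑ ^ p.toReal]
    _ = ∫⁻ x, ‖f x‖ₑ ^ p.toReal ∂μ := by
        rw [lintegral_mul_const _ hw, lintegral_ofReal_normed_bump, one_mul]

theorem memLp_mollify {f : E → ℝ} {p : ℝ≥0∞} (hf : MemLp f p μ) (hp : 1 ≤ p) (hp' : p ≠ ⊤) :
    MemLp (mollify φ μ f) p μ :=
  ⟨(contDiff_mollify (hf.locallyIntegrable hp)).continuous.aestronglyMeasurable,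
    (eLpNorm_mollify_le hf.1 hp hp').trans_lt hf.2⟩

theorem lpNorm_mollify_le {f : E → ℝ} {p : ℝ≥0∞} (hf : MemLp f p μ) (hp : 1 ≤ p) (hp' : p ≠ ⊤) :
    lpNorm (mollify φ μ f) p μ ≤ lpNorm f p μ := by
  rw [← toReal_eLpNorm (memLp_mollify hf hp hp').1, ← toReal_eLpNorm hf.1]
  exact ENNReal.toReal_mono hf.2.ne (eLpNorm_mollify_le hf.1 hp hp')

theorem memLp_two_mollify {f : E → ℝ} (hf : Integrable f μ) : MemLp (mollify φ μ f) 2 μ := by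
  have hcont := (contDiff_mollify (φ := φ) hf.locallyIntegrable).continuous
  obtain ⟨B, hB⟩ := exists_norm_mollify_le (φ := φ) hf
  have hint : Integrable (mollify φ μ f) μ :=
    memLp_one_iff_integrable.1
      (memLp_mollify (memLp_one_iff_integrable.2 hf) le_rfl ENNReal.one_ne_top)
  refine (memLp_two_iff_integrable_sq hcont.aestronglyMeasurable).2 ?_
  simpa only [pow_two] using hint.bdd_mul hcont.aestronglyMeasurable (.of_forall hB)

theorem integrable_normed_bump_sub_mul_mul {h g : E → ℝ} (hh : LocallyIntegrable h μ)
    (hg : Continuous g) (hgc : HasCompactSupport g) :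
    Integrable (fun xt : E × E => φ.normed μ (xt.1 - xt.2) * (g xt.1 * h xt.2)) (μ.prod μ) := by
  let K : Set E := (fun xt : E × E => xt.1 - xt.2) '' (tsupport g ×ˢ tsupport (φ.normed μ))
  have hK : IsCompact K :=
    (IsCompact.prod hgc φ.hasCompactSupport_normed).image (continuous_fst.sub continuous_snd)
  have hint : Integrable (K.indicator h) μ :=
    (integrable_indicator_iff hK.measurableSet).2 (hh.integrableOn_isCompact hK)
  obtain ⟨B, hB⟩ := φ.hasCompactSupport_normed.exists_bound_of_continuous
    (φ.continuous_normed (μ := μ))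
  refine (((hg.integrable_of_hasCompactSupport hgc).mul_prod hint).bdd_mul
    (f := fun xt : E × E => φ.normed μ (xt.1 - xt.2))
    (φ.continuous_normed.comp (continuous_fst.sub continuous_snd)).aestronglyMeasurable
    (.of_forall fun xt => hB _)).congr (.of_forall fun xt => ?_)
  by_cases hx : xt.1 ∈ tsupport g
  · by_cases hxt : xt.1 - xt.2 ∈ tsupport (φ.normed μ)
    · have hmem : xt.2 ∈ K := ⟨(xt.1, xt.1 - xt.2), ⟨hx, hxt⟩, sub_sub_cancel _ _⟩
      simp only [indicator_of_mem hmem]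
    · simp only [image_eq_zero_of_notMem_tsupport hxt, zero_mul]
  · simp only [image_eq_zero_of_notMem_tsupport hx, zero_mul]

theorem integral_mollify_mul {h g : E → ℝ} (hh : LocallyIntegrable h μ) (hg : Continuous g)
    (hgc : HasCompactSupport g) :
    ∫ x, mollify φ μ h x * g x ∂μ = ∫ x, h x * mollify φ μ g x ∂μ := by
  have mollify_eq (f : E → ℝ) (x : E) :
      mollify φ μ f x = ∫ t, φ.normed μ (x - t) * f t ∂μ :=
    convolution_eq_swap _
  calc ∫ x, mollify φ μ h x * g x ∂μ
      = ∫ x, ∫ t, φ.normed μ (x - t) * (g x * h t) ∂μ ∂μ := by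
        simp only [mollify_eq, ← integral_mul_const, mul_assoc, mul_comm (h _)]
    _ = ∫ t, ∫ x, φ.normed μ (x - t) * (g x * h t) ∂μ ∂μ :=
        integral_integral_swap (integrable_normed_bump_sub_mul_mul hh hg hgc)
    _ = ∫ t, h t * mollify φ μ g t ∂μ := by
        simp only [mollify_eq, ← integral_const_mul]
        refine integral_congr_ae (.of_forall fun t => integral_congr_ae (.of_forall fun x => ?_))
        simp only [← φ.normed_neg (x - t), neg_sub]
        ring

theorem integral_mul_norm_mollify_le {h : E → ℝ} (hh : LocallyIntegrable h μ) (hh0 : 0 ≤ᵐ[μ] h)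
    (hf : Continuous f) (hfc : HasCompactSupport f) :
    ∫ x, h x * ‖mollify φ μ f x‖ ∂μ ≤ ∫ x, mollify φ μ h x * ‖f x‖ ∂μ := by
  rw [integral_mollify_mul hh hf.norm hfc.norm]
  have hcont : Continuous (mollify φ μ fun x => ‖f x‖) :=
    (contDiff_mollify hf.norm.locallyIntegrable).continuous
  have hint : Integrable (fun x => h x * mollify φ μ (fun y => ‖f y‖) x) μ :=
    hh.integrable_smul_right_of_hasCompactSupport hcont
      (φ.hasCompactSupport_normed.convolution _ hfc.norm)
  refine integral_mono_of_nonneg ?_ hint ?_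
  · filter_upwards [hh0] with x hx using mul_nonneg hx (norm_nonneg _)
  · filter_upwards [hh0] with x hx
    exact mul_le_mul_of_nonneg_left (norm_mollify_le f x) hx

theorem fderiv_mollify_apply {f : E → ℝ} (hf : IsTestFunction f) (x v : E) :
    fderiv ℝ (mollify φ μ f) x v = mollify φ μ (fun y => fderiv ℝ f y v) x := by
  have hw : LocallyIntegrable (φ.normed μ) μ := φ.continuous_normed.locallyIntegrable
  have hderiv := hf.hasCompactSupport.hasFDerivAt_convolution_right
    (ContinuousLinearMap.lsmul ℝ ℝ) hw (hf.contDiff.of_le (by simp)) x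
  rw [mollify, hderiv.fderiv]
  exact convolution_precompR_apply _ hw (hf.hasCompactSupport.fderiv ℝ)
    (hf.contDiff.continuous_fderiv (by simp)) x v

/-- Bumps shrinking to the origin with `rOut = 2 * rIn`, along which mollifications of a locally
integrable function converge almost everywhere. -/
def shrinkingBump (E : Type*) [NormedAddCommGroup E] (n : ℕ) : ContDiffBump (0 : E) where
  rIn := 1 / (n + 1)
  rOut := 2 * (1 / (n + 1))
  rIn_pos := by positivity
  rIn_lt_rOut := lt_two_mul_self (by positivity)

theorem ae_tendsto_mollify_shrinkingBump [CompleteSpace F] (hf : LocallyIntegrable f μ) :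
    ∀ᵐ x ∂μ, Tendsto (fun n => mollify (shrinkingBump E n) μ f x) atTop (𝓝 (f x)) := by
  refine ContDiffBump.ae_convolution_tendsto_right_of_locallyIntegrable (K := 2) ?_
    (.of_forall fun n => le_rfl) hf
  simpa [shrinkingBump] using (tendsto_one_div_add_atTop_nhds_zero_nat (𝕜 := ℝ)).const_mul 2

end Mollification

section MollifiedDerivatives

variable {φ : ContDiffBump (0 : EuclideanSpace ℝ ι)} {f : EuclideanSpace ℝ ι → ℝ}

theorem partialDeriv_mollify (hf : IsTestFunction f) (i : ι) :
    partialDeriv i (mollify φ volume f) = mollify φ volume (partialDeriv i f) :=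
  funext fun x => fderiv_mollify_apply hf x _

theorem partialDeriv_partialDeriv_mollify (hf : IsTestFunction f) (i j : ι) :
    partialDeriv j (partialDeriv i (mollify φ volume f)) =
      mollify φ volume (partialDeriv j (partialDeriv i f)) := by
  rw [partialDeriv_mollify hf, partialDeriv_mollify (hf.partialDeriv i)]

theorem hessian_mollify (hf : IsTestFunction f) :
    hessian (mollify φ volume f) = mollify φ volume (hessian f) := by
  funext x
  ext ij
  have hint : Integrable fun t => φ.normed volume t • hessian f (x - t) :=
    (φ.continuous_normed.smul (hf.continuous_hessian.comp (by fun_prop))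
      ).integrable_of_hasCompactSupport φ.hasCompactSupport_normed.smul_right
  rw [mollify_apply, eval_integral_piLp fun _ => hint.eval_piLp _]
  exact congrFun (partialDeriv_partialDeriv_mollify hf ij.1 ij.2) x

theorem laplacian_mollify (hf : IsTestFunction f) :
    Δ (mollify φ volume f) = mollify φ volume (Δ f) := by
  funext x
  have hint (i : ι) : Integrable fun t =>
      φ.normed volume t • partialDeriv i (partialDeriv i f) (x - t) :=
    (φ.continuous_normed.smul (((hf.partialDeriv i).partialDeriv i).continuous.comp (by fun_prop))
      ).integrable_of_hasCompactSupport φ.hasCompactSupport_normed.smul_right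
  simp only [laplacian_eq_sum_partialDeriv hf.contDiff,
    laplacian_eq_sum_partialDeriv hf.mollify.contDiff, partialDeriv_partialDeriv_mollify hf,
    Finset.sum_apply, mollify_apply, Finset.smul_sum]
  rw [integral_finsetSum _ fun i _ => hint i]

end MollifiedDerivatives

theorem ae_eq_zero_of_tendsto_integral_zero {α : Type*} [MeasurableSpace α] {μ : Measure α}
    {F : ℕ → α → ℝ} {f : α → ℝ} (hF : ∀ n, Integrable (F n) μ) (hF0 : ∀ n, 0 ≤ᵐ[μ] F n)
    (hlim : ∀ᵐ x ∂μ, Tendsto (fun n => F n x) atTop (𝓝 (f x)))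
    (hint : Tendsto (fun n => ∫ x, F n x ∂μ) atTop (𝓝 0)) : f =ᵐ[μ] 0 := by
  have hnorm (n) : eLpNorm (F n) 1 μ = ENNReal.ofReal (∫ x, F n x ∂μ) := by
    rw [eLpNorm_one_eq_lintegral_enorm, ofReal_integral_eq_lintegral_ofReal (hF n) (hF0 n)]
    refine lintegral_congr_ae ?_
    filter_upwards [hF0 n] with x hx using Real.enorm_of_nonneg hx
  have hzero : Tendsto (fun n => eLpNorm (F n) 1 μ) atTop (𝓝 0) := by
    simpa only [hnorm, ENNReal.ofReal_zero] using ENNReal.tendsto_ofReal hint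
  have hfatou := Lp.eLpNorm_lim_le_liminf_eLpNorm (p := 1) (fun n => (hF n).1) f hlim
  rw [hzero.liminf_eq] at hfatou
  exact (eLpNorm_eq_zero_iff (aestronglyMeasurable_of_tendsto_ae atTop (fun n => (hF n).1) hlim)
    one_ne_zero).1 (le_zero_iff.1 hfatou)

section Liouville

variable {H φ : EuclideanSpace ℝ ι → ℝ}

theorem integral_sum_sq_partialDeriv_mul (hH : ContDiff ℝ ∞ H) (hharm : Δ H = 0)
    (hφ : IsTestFunction φ) :
    ∫ x, (∑ i, partialDeriv i H x ^ 2) * φ x = 2⁻¹ * ∫ x, H x ^ 2 * Δ φ x := by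
  have hΔsq (x) : Δ (H * H) x = 2 * ∑ i, partialDeriv i H x ^ 2 := by
    simp [laplacian_mul_self hH, hharm]
  have hparts := integral_mul_laplacian (f := H * H) (hH.mul hH) hφ
  simp only [hΔsq, Pi.mul_apply, mul_assoc, integral_const_mul] at hparts
  simp only [pow_two (H _), mul_assoc, hparts]
  rw [inv_mul_cancel_left₀ two_ne_zero]

theorem tendsto_integral_sum_sq_partialDeriv_mul_comp_smul (hH : ContDiff ℝ ∞ H)
    (hharm : Δ H = 0) (hL2 : MemLp H 2) (hφ : IsTestFunction φ) :
    Tendsto (fun c : ℝ => ∫ x, (∑ i, partialDeriv i H x ^ 2) * φ (c • x)) (𝓝[≠] 0) (𝓝 0) := by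
  obtain ⟨B, hB⟩ :=
    hφ.laplacian.hasCompactSupport.exists_bound_of_continuous hφ.laplacian.continuous
  have hbound : ∀ᶠ c : ℝ in 𝓝[≠] 0, ‖∫ x, (∑ i, partialDeriv i H x ^ 2) * φ (c • x)‖ ≤
      c ^ 2 * (2⁻¹ * (B * ∫ x, H x ^ 2)) := by
    filter_upwards [self_mem_nhdsWithin] with c hc
    have hpointwise (x) : ‖H x ^ 2 * Δ (fun y => φ (c • y)) x‖ ≤ c ^ 2 * B * H x ^ 2 := by
      rw [laplacian_comp_const_smul (hφ.contDiff.of_le (WithTop.coe_le_coe.2 le_top)), norm_mul,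
        norm_mul, Real.norm_of_nonneg (sq_nonneg _), Real.norm_of_nonneg (sq_nonneg c), mul_comm]
      gcongr
      exact hB _
    rw [integral_sum_sq_partialDeriv_mul hH hharm (hφ.comp_const_smul hc), norm_mul,
      Real.norm_of_nonneg (by norm_num : (0 : ℝ) ≤ 2⁻¹), mul_left_comm, ← mul_assoc (c ^ 2)]
    gcongr
    rw [← integral_const_mul]
    exact norm_integral_le_of_norm_le (hL2.integrable_sq.const_mul _) (.of_forall hpointwise)
  refine squeeze_zero_norm' hbound (tendsto_nhdsWithin_of_tendsto_nhds ?_)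
  exact Continuous.tendsto' (by fun_prop) _ _ (by simp)

theorem sum_sq_partialDeriv_eq_zero (hH : ContDiff ℝ ∞ H) (hharm : Δ H = 0) (hL2 : MemLp H 2) :
    (fun x => ∑ i, partialDeriv i H x ^ 2) = 0 := by
  let φ : ContDiffBump (0 : EuclideanSpace ℝ ι) := default
  let c (n : ℕ) : ℝ := 1 / (n + 1)
  have hc : Tendsto c atTop (𝓝 0) := tendsto_one_div_add_atTop_nhds_zero_nat
  have hc' : Tendsto c atTop (𝓝[≠] 0) :=
    tendsto_nhdsWithin_iff.2 ⟨hc, .of_forall fun n => Nat.one_div_pos_of_nat.ne'⟩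
  have hgrad : Continuous fun x => ∑ i, partialDeriv i H x ^ 2 :=
    continuous_finsetSum _ fun i _ => (contDiff_partialDeriv hH i).continuous.pow 2
  have hφ : IsTestFunction φ := ⟨φ.contDiff, φ.hasCompactSupport⟩
  have hlim (x) : Tendsto (fun n => (∑ i, partialDeriv i H x ^ 2) * φ (c n • x)) atTop
      (𝓝 (∑ i, partialDeriv i H x ^ 2)) := by
    have hone : φ (0 : EuclideanSpace ℝ ι) = 1 :=
      φ.one_of_mem_closedBall (mem_closedBall_self φ.rIn_pos.le)
    simpa [hone] using
      ((φ.continuous.tendsto _).comp (hc.smul_const x)).const_mul (∑ i, partialDeriv i H x ^ 2)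
  refine (Continuous.ae_eq_iff_eq volume hgrad continuous_zero).1 ?_
  exact ae_eq_zero_of_tendsto_integral_zero
    (fun n => (hφ.comp_const_smul Nat.one_div_pos_of_nat.ne').integrable_mul hgrad)
    (fun n => .of_forall fun x => mul_nonneg (Finset.sum_nonneg fun _ _ => sq_nonneg _) φ.nonneg)
    (.of_forall hlim)
    ((tendsto_integral_sum_sq_partialDeriv_mul_comp_smul hH hharm hL2 hφ).comp hc')

theorem eq_zero_of_laplacian_eq_zero_of_memLp_two [Nonempty ι] (hH : ContDiff ℝ ∞ H)
    (hharm : Δ H = 0) (hL2 : MemLp H 2) : H = 0 := by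
  have hfderiv (x) : fderiv ℝ H x = 0 := by
    have hgrad := congrFun (sum_sq_partialDeriv_eq_zero hH hharm hL2) x
    rw [Pi.zero_apply, Finset.sum_eq_zero_iff_of_nonneg fun _ _ => sq_nonneg _] at hgrad
    apply ContinuousLinearMap.coe_injective
    refine (EuclideanSpace.basisFun ι ℝ).toBasis.ext fun i => ?_
    simpa [partialDeriv] using hgrad i (Finset.mem_univ i)
  have hconst : H = fun _ => H 0 :=
    funext fun x => is_const_of_fderiv_eq_zero (hH.differentiable (by simp)) hfderiv x 0
  rw [hconst, memLp_const_iff two_ne_zero ENNReal.ofNat_ne_top] at hL2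
  rw [hconst, hL2.resolve_right (by simp)]
  rfl

theorem laplacian_eq_zero_of_integral_mul_laplacian_eq_zero (hH : ContDiff ℝ ∞ H)
    (hweak : ∀ ψ : EuclideanSpace ℝ ι → ℝ, IsTestFunction ψ → ∫ x, H x * Δ ψ x = 0) : Δ H = 0 := by
  have hcont : Continuous (Δ H) := by
    rw [laplacian_eq_sum_partialDeriv hH]
    exact Finset.sum_induction _ Continuous (fun _ _ => .add) continuous_zero fun i _ =>
      (contDiff_partialDeriv (contDiff_partialDeriv hH i) i).continuous
  refine (Continuous.ae_eq_iff_eq volume hcont continuous_zero).1 ?_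
  refine ae_eq_zero_of_integral_contDiff_smul_eq_zero hcont.locallyIntegrable fun ψ hψ hψc => ?_
  rw [← hweak ψ ⟨hψ, hψc⟩, integral_mul_laplacian hH ⟨hψ, hψc⟩]
  simp only [smul_eq_mul, mul_comm]

theorem ae_eq_zero_of_integral_mul_laplacian_eq_zero [Nonempty ι] (hL2 : MemLp H 2)
    (hweak : ∀ ψ : EuclideanSpace ℝ ι → ℝ, IsTestFunction ψ → ∫ x, H x * Δ ψ x = 0) :
    H =ᵐ[volume] 0 := by
  have hloc : LocallyIntegrable H := hL2.locallyIntegrable one_le_two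
  have hmollify (n) : mollify (shrinkingBump _ n) volume H = 0 := by
    refine eq_zero_of_laplacian_eq_zero_of_memLp_two (contDiff_mollify hloc)
      (laplacian_eq_zero_of_integral_mul_laplacian_eq_zero (contDiff_mollify hloc) fun ψ hψ => ?_)
      (memLp_mollify hL2 one_le_two ENNReal.ofNat_ne_top)
    rw [integral_mollify_mul hloc hψ.laplacian.continuous hψ.laplacian.hasCompactSupport,
      ← laplacian_mollify hψ]
    exact hweak _ hψ.mollify
  filter_upwards [ae_tendsto_mollify_shrinkingBump hloc] with x hx
  simp only [hmollify] at hx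
  exact tendsto_nhds_unique hx tendsto_const_nhds

end Liouville

section LaplacianDuality

/-- The subspace of `L²` formed by the Laplacians of test functions. -/
def laplacianRange (ι : Type*) [Fintype ι] :
    Submodule ℝ (Lp ℝ 2 (volume : Measure (EuclideanSpace ℝ ι))) where
  carrier := {v | ∃ ψ : EuclideanSpace ℝ ι → ℝ, IsTestFunction ψ ∧ v =ᵐ[volume] Δ ψ}
  add_mem' := by
    rintro v w ⟨ψ, hψ, hv⟩ ⟨θ, hθ, hw⟩
    have hΔ : Δ (ψ + θ) = Δ ψ + Δ θ := funext fun x =>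
      ContDiffAt.laplacian_add (hψ.contDiff.contDiffAt.of_le (WithTop.coe_le_coe.2 le_top))
        (hθ.contDiff.contDiffAt.of_le (WithTop.coe_le_coe.2 le_top))
    exact ⟨ψ + θ, hψ.add hθ, hΔ ▸ (Lp.coeFn_add v w).trans (hv.add hw)⟩
  zero_mem' := ⟨0, .zero, by
    rw [Pi.zero_def, InnerProductSpace.laplacian_const]
    exact Lp.coeFn_zero ℝ 2 volume⟩
  smul_mem' := by
    rintro c v ⟨ψ, hψ, hv⟩
    have hΔ : Δ (c • ψ) = c • Δ ψ := funext fun x => InnerProductSpace.laplacian_smul c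
      (hψ.contDiff.contDiffAt.of_le (WithTop.coe_le_coe.2 le_top))
    exact ⟨c • ψ, hψ.const_smul c, hΔ ▸ (Lp.coeFn_smul c v).trans (hv.const_smul c)⟩

theorem inner_Lp_eq_integral_mul {α : Type*} [MeasurableSpace α] {μ : Measure α}
    {v w : Lp ℝ 2 μ} {f g : α → ℝ} (hv : v =ᵐ[μ] f) (hw : w =ᵐ[μ] g) :
    ⟪v, w⟫_ℝ = ∫ x, f x * g x ∂μ := by
  rw [L2.inner_def]
  refine integral_congr_ae ?_
  filter_upwards [hv, hw] with x hvx hwx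
  simp [hvx, hwx, mul_comm]

theorem topologicalClosure_laplacianRange [Nonempty ι] :
    (laplacianRange ι).topologicalClosure = ⊤ := by
  rw [Submodule.topologicalClosure_eq_top_iff, Submodule.eq_bot_iff]
  intro v hv
  rw [Submodule.mem_orthogonal'] at hv
  refine (Lp.eq_zero_iff_ae_eq_zero).2
    (ae_eq_zero_of_integral_mul_laplacian_eq_zero (Lp.memLp v) fun ψ hψ => ?_)
  have hΔψ := (hψ.laplacian.memLp 2).coeFn_toLp (μ := volume)
  rw [← inner_Lp_eq_integral_mul (.refl _ _) hΔψ]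
  exact hv _ ⟨ψ, hψ, hΔψ⟩

theorem lpNorm_le_of_forall_integral_mul_laplacian_le [Nonempty ι] {f : EuclideanSpace ℝ ι → ℝ}
    (hf : MemLp f 2) {A : ℝ} (hA : 0 ≤ A)
    (h : ∀ ψ : EuclideanSpace ℝ ι → ℝ, IsTestFunction ψ →
      |∫ x, f x * Δ ψ x| ≤ A * lpNorm (Δ ψ) 2 volume) :
    lpNorm f 2 volume ≤ A := by
  let v := hf.toLp f
  have hclosed : IsClosed {w : Lp ℝ 2 (volume : Measure (EuclideanSpace ℝ ι)) |
      |⟪v, w⟫_ℝ| ≤ A * ‖w‖} :=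
    isClosed_le (by fun_prop) (by fun_prop)
  have hrange : (laplacianRange ι : Set (Lp ℝ 2 (volume : Measure (EuclideanSpace ℝ ι)))) ⊆
      {w | |⟪v, w⟫_ℝ| ≤ A * ‖w‖} := by
    rintro w ⟨ψ, hψ, hw⟩
    have hnorm : ‖w‖ = lpNorm (Δ ψ) 2 volume := by
      rw [Lp.norm_def, eLpNorm_congr_ae hw, toReal_eLpNorm (hψ.laplacian.memLp 2).1]
    change |⟪v, w⟫_ℝ| ≤ A * ‖w‖
    rw [inner_Lp_eq_integral_mul hf.coeFn_toLp hw, hnorm]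
    exact h ψ hψ
  have hself : |⟪v, v⟫_ℝ| ≤ A * ‖v‖ := by
    refine closure_minimal hrange hclosed ?_
    rw [← Submodule.topologicalClosure_coe, topologicalClosure_laplacianRange]
    trivial
  have hv : ‖v‖ = lpNorm f 2 volume := by rw [Lp.norm_toLp, toReal_eLpNorm hf.1]
  rw [real_inner_self_eq_norm_sq, abs_of_nonneg (sq_nonneg _), hv, pow_two] at hself
  rcases (lpNorm_nonneg (f := f) (p := 2) (μ := volume)).eq_or_lt with hzero | hpos
  · rwa [← hzero]
  · exact le_of_mul_le_mul_right hself hpos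

end LaplacianDuality

section HessianDomination

/-- The distribution `Δp` is controlled, up to an `H⁻²` term of size `K`, by `κ` times the Hessian
of the test function weighted by `p` itself. -/
def HessianDominated (κ K : ℝ) (p : EuclideanSpace ℝ ι → ℝ) : Prop :=
  ∀ ψ : EuclideanSpace ℝ ι → ℝ, IsTestFunction ψ →
    |∫ x, p x * Δ ψ x| ≤ κ * (∫ x, p x * ‖hessian ψ x‖) + K * lpNorm (Δ ψ) 2 volume

namespace HessianDominated

variable {κ K : ℝ} {p : EuclideanSpace ℝ ι → ℝ}

theorem lpNorm_le [Nonempty ι] (h : HessianDominated κ K p) (hκ : 0 ≤ κ) (hκ1 : κ < 1)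
    (hK : 0 ≤ K) (hp : MemLp p 2) : lpNorm p 2 volume ≤ K / (1 - κ) := by
  have habsorb : lpNorm p 2 volume ≤ κ * lpNorm p 2 volume + K := by
    refine lpNorm_le_of_forall_integral_mul_laplacian_le hp
      (add_nonneg (mul_nonneg hκ lpNorm_nonneg) hK) fun ψ hψ => (h ψ hψ).trans ?_
    have hholder : ∫ x, p x * ‖hessian ψ x‖ ≤ lpNorm p 2 volume * lpNorm (Δ ψ) 2 volume := by
      rw [← lpNorm_hessian_eq_lpNorm_laplacian hψ]
      refine (integral_mono ?_ (integrable_norm_mul_norm hp (hψ.memLp_hessian 2)) fun x => ?_).trans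
        (integral_norm_mul_norm_le_lpNorm_mul_lpNorm hp (hψ.memLp_hessian 2))
      · exact hp.integrable_mul (hψ.memLp_hessian 2).norm
      · exact mul_le_mul_of_nonneg_right (le_abs_self _) (norm_nonneg _)
    rw [add_mul, mul_assoc]
    gcongr
  rw [le_div_iff₀ (sub_pos.2 hκ1)]
  linarith

protected theorem mollify (h : HessianDominated κ K p) (hκ : 0 ≤ κ) (hK : 0 ≤ K)
    (hp : LocallyIntegrable p) (hp0 : 0 ≤ᵐ[volume] p)
    (φ : ContDiffBump (0 : EuclideanSpace ℝ ι)) :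
    HessianDominated κ K (mollify φ volume p) := by
  intro ψ hψ
  rw [integral_mollify_mul hp hψ.laplacian.continuous hψ.laplacian.hasCompactSupport,
    ← laplacian_mollify hψ]
  refine (h _ hψ.mollify).trans
    (add_le_add (mul_le_mul_of_nonneg_left ?_ hκ) (mul_le_mul_of_nonneg_left ?_ hK))
  · rw [hessian_mollify hψ]
    exact integral_mul_norm_mollify_le hp hp0 hψ.continuous_hessian hψ.hasCompactSupport_hessian
  · rw [laplacian_mollify hψ]
    exact lpNorm_mollify_le (hψ.laplacian.memLp 2) one_le_two ENNReal.ofNat_ne_top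

theorem memLp_two [Nonempty ι] (h : HessianDominated κ K p) (hκ : 0 ≤ κ) (hκ1 : κ < 1)
    (hK : 0 ≤ K) (hp : Integrable p) (hp0 : 0 ≤ᵐ[volume] p) : MemLp p 2 := by
  have hloc := hp.locallyIntegrable
  have hbound (n) : eLpNorm (mollify (shrinkingBump _ n) volume p) 2 volume ≤
      ENNReal.ofReal (K / (1 - κ)) := by
    have hmem := memLp_two_mollify (φ := shrinkingBump _ n) hp
    rw [← ofReal_lpNorm hmem]
    exact ENNReal.ofReal_le_ofReal ((h.mollify hκ hK hloc hp0 _).lpNorm_le hκ hκ1 hK hmem)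
  have hfatou := Lp.eLpNorm_lim_le_liminf_eLpNorm (p := 2)
    (fun n => (contDiff_mollify (φ := shrinkingBump _ n) hloc).continuous.aestronglyMeasurable)
    p (ae_tendsto_mollify_shrinkingBump hloc)
  exact ⟨hp.1, hfatou.trans_lt
    ((liminf_le_of_frequently_le' (.of_forall hbound)).trans_lt ENNReal.ofReal_lt_top)⟩

end HessianDominated

end HessianDomination

section Pressure

/-- The tensor `v ⊗ w` with entries `vᵢ wⱼ`, normed by the Frobenius norm as `hessian` is. -/
def outer (v w : EuclideanSpace ℝ ι) : EuclideanSpace ℝ (ι × ι) :=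
  WithLp.toLp 2 fun ij => v ij.1 * w ij.2

theorem norm_outer (v w : EuclideanSpace ℝ ι) : ‖outer v w‖ = ‖v‖ * ‖w‖ := by
  rw [← sq_eq_sq₀ (norm_nonneg _) (by positivity), mul_pow]
  simp only [EuclideanSpace.real_norm_sq_eq, outer, Fintype.sum_prod_type, mul_pow,
    Finset.sum_mul_sum]

theorem continuous_outer {ι : Type*} :
    Continuous fun vw : EuclideanSpace ℝ ι × EuclideanSpace ℝ ι => outer vw.1 vw.2 := by
  unfold outer
  fun_prop

variable {f : EuclideanSpace ℝ ι → ℝ}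

theorem inner_outer_hessian (hf : ContDiff ℝ ∞ f) (v w x : EuclideanSpace ℝ ι) :
    ⟪outer v w, hessian f x⟫_ℝ = fderiv ℝ (fderiv ℝ f) x w v := by
  conv_rhs => rw [← sum_smul_basisFun v, ← sum_smul_basisFun w]
  simp only [PiLp.inner_apply, outer, hessian, Fintype.sum_prod_type,
    partialDeriv_partialDeriv_apply hf, map_sum, map_smul, sum_apply,
    smul_apply, smul_eq_mul, Finset.mul_sum, RCLike.inner_apply, conj_trivial]
  exact Finset.sum_congr rfl fun i _ => Finset.sum_congr rfl fun j _ => by ring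

theorem norm_fderiv_fderiv_le_norm_hessian (hf : ContDiff ℝ ∞ f) (x : EuclideanSpace ℝ ι) :
    ‖fderiv ℝ (fderiv ℝ f) x‖ ≤ ‖hessian f x‖ := by
  refine ContinuousLinearMap.opNorm_le_bound _ (norm_nonneg _) fun w =>
    ContinuousLinearMap.opNorm_le_bound _ (by positivity) fun v => ?_
  calc ‖fderiv ℝ (fderiv ℝ f) x w v‖ = ‖⟪outer v w, hessian f x⟫_ℝ‖ := by
        rw [inner_outer_hessian hf]
    _ ≤ ‖outer v w‖ * ‖hessian f x‖ := norm_inner_le_norm _ _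
    _ = ‖hessian f x‖ * ‖w‖ * ‖v‖ := by rw [norm_outer]; ring

/-- The constant of the Sobolev inequality `‖v‖_{L^s} ≤ C ‖Dv‖_{L²}` for covector fields `v`, where
`1/s = 1/2 - 1/n` in dimension `n`. -/
def sobolevConst (ι : Type*) [Fintype ι] : ℝ≥0 :=
  SNormLESNormFDerivOfEqConst (EuclideanSpace ℝ ι →L[ℝ] ℝ)
    (volume : Measure (EuclideanSpace ℝ ι)) 2

theorem eLpNorm_fderiv_le_mul_eLpNorm_hessian [Nonempty ι] {s : ℝ≥0}
    (hs : (s : ℝ)⁻¹ = 2⁻¹ - (Fintype.card ι : ℝ)⁻¹) (hf : IsTestFunction f) :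
    eLpNorm (fderiv ℝ f) s volume ≤ sobolevConst ι * eLpNorm (hessian f) 2 volume := by
  have sobolev : eLpNorm (fderiv ℝ f) s volume ≤
      sobolevConst ι * eLpNorm (fderiv ℝ (fderiv ℝ f)) (2 : ℝ≥0) volume :=
    eLpNorm_le_eLpNorm_fderiv_of_eq volume (hf.contDiff.fderiv_right (by norm_cast))
      (hf.hasCompactSupport.fderiv (𝕜 := ℝ)) one_le_two (by simp [Fintype.card_pos])
      (by simpa using hs)
  have hessian_bound : eLpNorm (fderiv ℝ (fderiv ℝ f)) 2 volume ≤ eLpNorm (hessian f) 2 volume :=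
    eLpNorm_mono (f := fderiv ℝ (fderiv ℝ f)) (g := hessian f)
      (norm_fderiv_fderiv_le_norm_hessian hf.contDiff)
  rw [ENNReal.coe_ofNat] at sobolev
  exact sobolev.trans (mul_le_mul_right hessian_bound _)

theorem lpNorm_fderiv_le_mul_lpNorm_laplacian [Nonempty ι] {s : ℝ≥0}
    (hs : (s : ℝ)⁻¹ = 2⁻¹ - (Fintype.card ι : ℝ)⁻¹) (hf : IsTestFunction f) :
    lpNorm (fderiv ℝ f) s volume ≤ sobolevConst ι * lpNorm (Δ f) 2 volume := by
  have hess := hf.memLp_hessian 2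
  rw [← lpNorm_hessian_eq_lpNorm_laplacian hf, ← toReal_eLpNorm (hf.memLp_fderiv s).1,
    ← toReal_eLpNorm hess.1, ← ENNReal.coe_toReal, ← ENNReal.toReal_mul]
  exact ENNReal.toReal_mono (ENNReal.mul_ne_top ENNReal.coe_ne_top hess.2.ne)
    (eLpNorm_fderiv_le_mul_eLpNorm_hessian hs hf)

variable {p h : EuclideanSpace ℝ ι → ℝ} {T S : EuclideanSpace ℝ ι → EuclideanSpace ℝ (ι × ι)}
  {g : EuclideanSpace ℝ ι → EuclideanSpace ℝ ι} {κ : ℝ} {s : ℝ≥0} {r : ℝ≥0∞}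

theorem abs_integral_inner_hessian_le (hS : MemLp S 2) (hf : IsTestFunction f) :
    |∫ x, ⟪S x, hessian f x⟫_ℝ| ≤ lpNorm S 2 volume * lpNorm (Δ f) 2 volume := by
  have hess := hf.memLp_hessian 2
  rw [← lpNorm_hessian_eq_lpNorm_laplacian hf]
  calc ‖∫ x, ⟪S x, hessian f x⟫_ℝ‖ ≤ ∫ x, ‖S x‖ * ‖hessian f x‖ :=
        norm_integral_le_of_norm_le (integrable_norm_mul_norm hS hess)
          (.of_forall fun x => norm_inner_le_norm _ _)
    _ ≤ lpNorm S 2 volume * lpNorm (hessian f) 2 volume :=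
        integral_norm_mul_norm_le_lpNorm_mul_lpNorm hS hess

theorem abs_integral_fderiv_apply_le [Nonempty ι] [r.HolderConjugate s]
    (hs : (s : ℝ)⁻¹ = 2⁻¹ - (Fintype.card ι : ℝ)⁻¹) (hg : MemLp g r) (hf : IsTestFunction f) :
    |∫ x, fderiv ℝ f x (g x)| ≤
      lpNorm g r volume * sobolevConst ι * lpNorm (Δ f) 2 volume := by
  have hderiv := hf.memLp_fderiv (μ := volume) s
  have pointwise (x : EuclideanSpace ℝ ι) : ‖fderiv ℝ f x (g x)‖ ≤ ‖g x‖ * ‖fderiv ℝ f x‖ := by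
    rw [mul_comm]
    exact ContinuousLinearMap.le_opNorm _ _
  calc |∫ x, fderiv ℝ f x (g x)| ≤ ∫ x, ‖g x‖ * ‖fderiv ℝ f x‖ :=
        norm_integral_le_of_norm_le (integrable_norm_mul_norm hg hderiv) (.of_forall pointwise)
    _ ≤ lpNorm g r volume * lpNorm (fderiv ℝ f) s volume :=
        integral_norm_mul_norm_le_lpNorm_mul_lpNorm hg hderiv
    _ ≤ _ := by
        rw [mul_assoc]
        exact mul_le_mul_of_nonneg_left (lpNorm_fderiv_le_mul_lpNorm_laplacian hs hf)
          lpNorm_nonneg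

theorem integrable_mul_norm_hessian (hp : Integrable p) (hf : IsTestFunction f) :
    Integrable fun x => p x * ‖hessian f x‖ := by
  obtain ⟨B, hB⟩ := hf.hasCompactSupport_hessian.exists_bound_of_continuous hf.continuous_hessian
  exact hp.mul_bdd (c := B) hf.continuous_hessian.norm.aestronglyMeasurable
    (.of_forall fun x => by simpa using hB x)

theorem ae_norm_inner_hessian_le (hT : ∀ᵐ x, ‖T x‖ ≤ κ * p x + h x) :
    ∀ᵐ x, ‖⟪T x, hessian f x⟫_ℝ‖ ≤
      κ * (p x * ‖hessian f x‖) + ‖h x‖ * ‖hessian f x‖ := by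
  filter_upwards [hT] with x hx
  calc ‖⟪T x, hessian f x⟫_ℝ‖ ≤ ‖T x‖ * ‖hessian f x‖ := norm_inner_le_norm _ _
    _ ≤ (κ * p x + ‖h x‖) * ‖hessian f x‖ := by
        gcongr
        exact hx.trans (add_le_add_right (le_abs_self _) _)
    _ = _ := by ring

theorem integrable_inner_hessian (hTm : AEStronglyMeasurable T)
    (hT : ∀ᵐ x, ‖T x‖ ≤ κ * p x + h x) (hp : Integrable p) (hh : MemLp h 2)
    (hf : IsTestFunction f) : Integrable fun x => ⟪T x, hessian f x⟫_ℝ :=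
  (((integrable_mul_norm_hessian hp hf).const_mul κ).add
    (integrable_norm_mul_norm hh (hf.memLp_hessian 2))).mono'
    (hTm.inner hf.continuous_hessian.aestronglyMeasurable) (ae_norm_inner_hessian_le hT)

theorem abs_integral_inner_hessian_le_of_norm_le (hT : ∀ᵐ x, ‖T x‖ ≤ κ * p x + h x)
    (hp : Integrable p) (hh : MemLp h 2) (hf : IsTestFunction f) :
    |∫ x, ⟪T x, hessian f x⟫_ℝ| ≤
      κ * (∫ x, p x * ‖hessian f x‖) + lpNorm h 2 volume * lpNorm (Δ f) 2 volume := by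
  have hpH := (integrable_mul_norm_hessian hp hf).const_mul κ
  have hess := hf.memLp_hessian 2
  have hhH := integrable_norm_mul_norm hh hess
  refine (norm_integral_le_of_norm_le (hpH.add hhH) (ae_norm_inner_hessian_le hT)).trans ?_
  rw [integral_add' hpH hhH, integral_const_mul, ← lpNorm_hessian_eq_lpNorm_laplacian hf]
  exact add_le_add_right (integral_norm_mul_norm_le_lpNorm_mul_lpNorm hh hess) _

theorem memLp_two_of_integral_inner_hessian_add_mul_laplacian [Nonempty ι] [r.HolderConjugate s]
    (hs : (s : ℝ)⁻¹ = 2⁻¹ - (Fintype.card ι : ℝ)⁻¹) (hκ : 0 ≤ κ) (hκ1 : κ < 1)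
    (hp : Integrable p) (hp0 : 0 ≤ᵐ[volume] p) (hTm : AEStronglyMeasurable T)
    (hT : ∀ᵐ x, ‖T x‖ ≤ κ * p x + h x) (hh : MemLp h 2) (hS : MemLp S 2) (hg : MemLp g r)
    (hmom : ∀ ψ : EuclideanSpace ℝ ι → ℝ, IsTestFunction ψ →
      ∫ x, (⟪T x, hessian ψ x⟫_ℝ + p x * Δ ψ x) =
        (∫ x, ⟪S x, hessian ψ x⟫_ℝ) - ∫ x, fderiv ℝ ψ x (g x)) :
    MemLp p 2 := by
  let K : ℝ := lpNorm h 2 volume + lpNorm S 2 volume + lpNorm g r volume * sobolevConst ι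
  have hK : 0 ≤ K := add_nonneg (add_nonneg lpNorm_nonneg lpNorm_nonneg)
    (mul_nonneg lpNorm_nonneg NNReal.zero_le_coe)
  suffices hdom : HessianDominated κ K p from hdom.memLp_two hκ hκ1 hK hp hp0
  intro ψ hψ
  have hpΔ : Integrable fun x => p x * Δ ψ x := by
    obtain ⟨B, hB⟩ :=
      hψ.laplacian.hasCompactSupport.exists_bound_of_continuous hψ.laplacian.continuous
    exact hp.mul_bdd hψ.laplacian.continuous.aestronglyMeasurable (.of_forall hB)
  have identity : ∫ x, p x * Δ ψ x =
      (∫ x, ⟪S x, hessian ψ x⟫_ℝ) - (∫ x, fderiv ℝ ψ x (g x)) - ∫ x, ⟪T x, hessian ψ x⟫_ℝ := by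
    rw [← hmom ψ hψ, integral_add (integrable_inner_hessian hTm hT hp hh hψ) hpΔ]
    ring
  have viscous := abs_integral_inner_hessian_le hS hψ
  have force := abs_integral_fderiv_apply_le hs hg hψ
  have convective := abs_integral_inner_hessian_le_of_norm_le hT hp hh hψ
  rw [identity]
  calc _ ≤ _ := (abs_sub _ _).trans (add_le_add_left (abs_sub _ _) _)
    _ ≤ _ := add_le_add (add_le_add viscous force) convective
    _ = _ := by ring

end Pressure

section Density

theorem mul_sq_le_add_pow_three {a b : ℝ} (ha : 0 ≤ a) (hb : 0 ≤ b) :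
    a * b ^ 2 ≤ 1 / 3 * a ^ 3 + 2 / 3 * b ^ 3 := by
  nlinarith [mul_nonneg (add_nonneg ha (mul_nonneg two_pos.le hb)) (sq_nonneg (a - b))]

theorem rpow_le_rpow_add_rpow {a p q r : ℝ} (ha : 0 ≤ a) (hq : q ≠ 0) (hpq : p ≤ q)
    (hqr : q ≤ r) : a ^ q ≤ a ^ p + a ^ r := by
  rcases ha.eq_or_lt with rfl | hpos
  · rw [Real.zero_rpow hq]
    exact add_nonneg (Real.rpow_nonneg le_rfl _) (Real.rpow_nonneg le_rfl _)
  rcases le_total a 1 with hle | hge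
  · exact (Real.rpow_le_rpow_of_exponent_ge hpos hle hpq).trans
      (le_add_of_nonneg_right (Real.rpow_nonneg ha _))
  · exact (Real.rpow_le_rpow_of_exponent_le hge hqr).trans
      (le_add_of_nonneg_left (Real.rpow_nonneg ha _))

variable {α F : Type*} [MeasurableSpace α] {μ : Measure α} [NormedAddCommGroup F]

theorem memLp_rpow_iff {f : α → ℝ} (hf : AEStronglyMeasurable f μ) (hf0 : 0 ≤ᵐ[μ] f) {c q : ℝ}
    (hc : 0 < c) :
    MemLp (fun x => f x ^ c) (ENNReal.ofReal q) μ ↔ MemLp f (ENNReal.ofReal (q * c)) μ := by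
  have hquot : ENNReal.ofReal q = ENNReal.ofReal (q * c) / ENNReal.ofReal c := by
    rw [← ENNReal.ofReal_div_of_pos hc, mul_div_cancel_right₀ q hc.ne']
  have hnorm : (fun x => ‖f x‖ ^ (ENNReal.ofReal c).toReal) =ᵐ[μ] fun x => f x ^ c := by
    filter_upwards [hf0] with x hx
    rw [Real.norm_of_nonneg hx, ENNReal.toReal_ofReal hc.le]
  rw [hquot, ← memLp_congr_ae hnorm,
    memLp_norm_rpow_iff hf (by simpa using hc) ENNReal.ofReal_ne_top]

theorem memLp_two_norm_pow_three {u : α → F} (hu : MemLp u 6 μ) :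
    MemLp (fun x => ‖u x‖ ^ 3) 2 μ := by
  refine (memLp_two_iff_integrable_sq (hu.1.norm.pow 3)).2 ?_
  simpa only [Pi.pow_apply, ← pow_mul] using hu.integrable_norm_pow (p := 6) (by norm_num)

theorem norm_smul_outer_le {γ a : ℝ} (hγ3 : 3 ≤ γ) (hγ6 : γ ≤ 6)
    (ha : 0 ≤ a) (v : EuclideanSpace ℝ ι) :
    ‖a • outer v v‖ ≤ 1 / 3 * a ^ γ + (1 / 3 * a ^ (γ / 2) + 2 / 3 * ‖v‖ ^ 3) := by
  have hcube : a ^ 3 ≤ a ^ (γ / 2) + a ^ γ := by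
    rw [← Real.rpow_natCast]
    exact rpow_le_rpow_add_rpow ha (by norm_num) (by norm_num; linarith) (by simpa using hγ3)
  calc ‖a • outer v v‖ = a * ‖v‖ ^ 2 := by
        rw [norm_smul, Real.norm_of_nonneg ha, norm_outer, pow_two]
    _ ≤ 1 / 3 * a ^ 3 + 2 / 3 * ‖v‖ ^ 3 := mul_sq_le_add_pow_three ha (norm_nonneg v)
    _ ≤ _ := by linarith

theorem memLp_two_mul_of_integral_inner_outer_add_rpow_mul_laplacian [Nonempty ι] {s : ℝ≥0}
    {r : ℝ≥0∞} [r.HolderConjugate s] (hs : (s : ℝ)⁻¹ = 2⁻¹ - (Fintype.card ι : ℝ)⁻¹)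
    {γ : ℝ} (hγ3 : 3 ≤ γ) (hγ6 : γ ≤ 6) {ρ : EuclideanSpace ℝ ι → ℝ}
    {u g : EuclideanSpace ℝ ι → EuclideanSpace ℝ ι}
    {S : EuclideanSpace ℝ ι → EuclideanSpace ℝ (ι × ι)}
    (hρ0 : 0 ≤ᵐ[volume] ρ) (hρ : MemLp ρ (ENNReal.ofReal γ)) (hu : MemLp u 6) (hS : MemLp S 2)
    (hg : MemLp g r)
    (hmom : ∀ ψ : EuclideanSpace ℝ ι → ℝ, IsTestFunction ψ →
      ∫ x, (⟪ρ x • outer (u x) (u x), hessian ψ x⟫_ℝ + ρ x ^ γ * Δ ψ x) =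
        (∫ x, ⟪S x, hessian ψ x⟫_ℝ) - ∫ x, fderiv ℝ ψ x (g x)) :
    MemLp ρ (ENNReal.ofReal (2 * γ)) := by
  have hγ : 0 < γ := by linarith
  have hpressure : Integrable fun x => ρ x ^ γ := by
    rw [← memLp_one_iff_integrable, ← ENNReal.ofReal_one, memLp_rpow_iff hρ.1 hρ0 hγ]
    simpa using hρ
  have hpressure0 : 0 ≤ᵐ[volume] fun x => ρ x ^ γ := by
    filter_upwards [hρ0] with x hx using Real.rpow_nonneg hx γ
  have hsqrt : MemLp (fun x => ρ x ^ (γ / 2)) 2 := by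
    simpa [mul_div_cancel₀, hρ] using
      memLp_rpow_iff (c := γ / 2) (q := 2) hρ.1 hρ0 (by positivity)
  have hremainder := (hsqrt.const_mul (1 / 3)).add ((memLp_two_norm_pow_three hu).const_mul (2 / 3))
  have hconvective : ∀ᵐ x, ‖ρ x • outer (u x) (u x)‖ ≤
      1 / 3 * ρ x ^ γ + (1 / 3 * ρ x ^ (γ / 2) + 2 / 3 * ‖u x‖ ^ 3) := by
    filter_upwards [hρ0] with x hx using norm_smul_outer_le hγ3 hγ6 hx (u x)
  rw [← memLp_rpow_iff hρ.1 hρ0 hγ, ENNReal.ofReal_ofNat]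
  exact memLp_two_of_integral_inner_hessian_add_mul_laplacian hs (by norm_num) (by norm_num)
    hpressure hpressure0
    (hρ.1.smul (continuous_outer.comp_aestronglyMeasurable (hu.1.prodMk hu.1)))
    hconvective hremainder hS hg hmom

end Density

section WeakSolutions

theorem memLp_toLp {α κ : Type*} [MeasurableSpace α] {m : Measure α} [Fintype κ]
    {f : α → κ → ℝ} {p : ℝ≥0∞} (hf : MemLp f p m) :
    MemLp (fun x => WithLp.toLp 2 (f x) : α → EuclideanSpace ℝ κ) p m :=
  (EuclideanSpace.equiv κ ℝ).symm.toContinuousLinearMap.comp_memLp' hf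

theorem MemD012.memLp_six {Ω : Set E3} {u : E3 → Fin 3 → ℝ} {du : E3 → Fin 3 → Fin 3 → ℝ}
    (hu : MemD012 Ω u du) (hum : AEStronglyMeasurable u (volume.restrict Ω)) :
    MemLp u 6 (volume.restrict Ω) := by
  obtain ⟨-, -, -, un, htest, -, hlim⟩ := hu
  obtain ⟨n, hn⟩ := (hlim.eventually (gt_mem_nhds zero_lt_one)).exists
  have hun : MemLp (un n) 6 (volume.restrict Ω) :=
    (htest n).1.continuous.memLp_of_hasCompactSupport (htest n).2.1
  have hdiff : MemLp (un n - u) 6 (volume.restrict Ω) :=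
    ⟨hun.1.sub hum, hn.trans ENNReal.one_lt_top⟩
  simpa using hun.sub hdiff

theorem memLp_Smat {α : Type*} [MeasurableSpace α] {m : Measure α} {p : ℝ≥0∞} (μ η : ℝ)
    {M : α → Fin 3 → Fin 3 → ℝ} (hM : MemLp M p m) :
    MemLp (fun x (ij : Fin 3 × Fin 3) => Smat μ η (M x) ij.1 ij.2) p m := by
  have entry (i j : Fin 3) : MemLp (fun x => M x i j) p m := (hM.eval i).eval j
  have trace : MemLp (fun x => ∑ k, M x k k) p m := memLp_finsetSum _ fun k _ => entry k k
  refine .of_eval fun ij => ?_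
  exact ((((entry ij.1 ij.2).add (entry ij.2 ij.1)).sub
    ((trace.const_mul _).mul_const _)).const_mul μ).add ((trace.const_mul η).mul_const _)

theorem pd_eq_partialDeriv (f : E3 → ℝ) (i : Fin 3) : pd f i = partialDeriv i f := by
  funext x
  rw [pd, partialDeriv, EuclideanSpace.basisFun_apply]

theorem IsTestFunction.isTestVec_pd {ψ : E3 → ℝ} (hψ : IsTestFunction ψ) :
    IsTestVec 1 univ fun x i => pd ψ i x := by
  simp only [pd_eq_partialDeriv]
  refine ⟨contDiff_pi.2 fun i => (hψ.partialDeriv i).contDiff.of_le (by norm_cast), ?_,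
    subset_univ _⟩
  refine .intro hψ.hasCompactSupport fun x hx => funext fun i => ?_
  simp [partialDeriv, fderiv_of_notMem_tsupport ℝ hx]

theorem WeakSolution.momentum_gradient {μ η : ℝ} {p : ℝ → ℝ} {G : E3 → ℝ} {dG : E3 → Fin 3 → ℝ}
    {ρ : E3 → ℝ} {u : E3 → Fin 3 → ℝ} {du : E3 → Fin 3 → Fin 3 → ℝ}
    (hsol : WeakSolution univ μ η p G dG ρ u du) {ψ : E3 → ℝ} (hψ : IsTestFunction ψ) :
    ∫ x, (⟪ρ x • outer (WithLp.toLp 2 (u x)) (WithLp.toLp 2 (u x)), hessian ψ x⟫_ℝ +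
        p (ρ x) * Δ ψ x) =
      (∫ x, ⟪WithLp.toLp 2 fun ij : Fin 3 × Fin 3 => Smat μ η (du x) ij.1 ij.2,
        hessian ψ x⟫_ℝ) - ∫ x, fderiv ℝ ψ x (WithLp.toLp 2 (ρ x • dG x)) := by
  have hmom := hsol.momentum _ hψ.isTestVec_pd
  rw [Measure.restrict_univ] at hmom
  have hess (x : E3) (i j : Fin 3) : tgrad (fun y k => pd ψ k y) x i j = hessian ψ x (i, j) := by
    simp only [tgrad, hessian, pd_eq_partialDeriv]
  have lap (x : E3) : ∑ i, hessian ψ x (i, i) = Δ ψ x :=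
    (congrFun (laplacian_eq_sum_partialDeriv hψ.contDiff) x).symm
  have convective (x : E3) :
      ⟪ρ x • outer (WithLp.toLp 2 (u x)) (WithLp.toLp 2 (u x)), hessian ψ x⟫_ℝ =
        ∑ i, ∑ j, ρ x * u x i * u x j * hessian ψ x (i, j) := by
    simp [PiLp.inner_apply, outer, Fintype.sum_prod_type, mul_comm, mul_assoc, mul_left_comm]
  have viscous (x : E3) :
      ⟪WithLp.toLp 2 fun ij : Fin 3 × Fin 3 => Smat μ η (du x) ij.1 ij.2, hessian ψ x⟫_ℝ =
        ∑ i, ∑ j, Smat μ η (du x) i j * hessian ψ x (i, j) := by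
    simp [PiLp.inner_apply, Fintype.sum_prod_type, mul_comm]
  have force (x : E3) :
      fderiv ℝ ψ x (WithLp.toLp 2 (ρ x • dG x)) = ∑ i, ρ x * dG x i * pd ψ i x := by
    simp only [pd_eq_partialDeriv]
    exact fderiv_apply_eq_sum_partialDeriv ψ x _
  simpa only [convective, viscous, force, hess, lap] using hmom

theorem memLp_smul_six_fifths {α F : Type*} [MeasurableSpace α] {m : Measure α}
    [NormedAddCommGroup F] [NormedSpace ℝ F] {γ : ℝ} (hγ : 6 / 5 < γ) {ρ : α → ℝ} {v : α → F}
    (hρ : MemLp ρ (ENNReal.ofReal γ) m) (hv : MemLp v (ENNReal.ofReal (6 * γ / (5 * γ - 6))) m) :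
    MemLp (fun x => ρ x • v x) (ENNReal.ofReal (6 / 5)) m := by
  have hpos : 0 < 5 * γ - 6 := by linarith
  have exponents : ENNReal.HolderTriple (ENNReal.ofReal γ)
      (ENNReal.ofReal (6 * γ / (5 * γ - 6))) (ENNReal.ofReal (6 / 5)) := by
    refine ((Real.holderTriple_iff _ _ _).2 ⟨?_, by linarith, ?_⟩).ennrealOfReal
    · field_simp
      ring
    · exact div_pos (by linarith) hpos
  exact hv.smul hρ

theorem higher_integrability_Lgamma_general {μ η γ : ℝ} (hγ3 : 3 ≤ γ) (hγ6 : γ ≤ 6) {G : E3 → ℝ}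
    {dG : E3 → Fin 3 → ℝ} {ρ : E3 → ℝ} {u : E3 → Fin 3 → ℝ} {du : E3 → Fin 3 → Fin 3 → ℝ}
    (hdG : MemLp dG (ENNReal.ofReal (6 * γ / (5 * γ - 6))))
    (hsol : IsentropicWeakSolution μ η γ G dG ρ u du) (hρ : MemLp ρ (ENNReal.ofReal γ)) :
    MemLp ρ (ENNReal.ofReal (2 * γ)) := by
  have hu : MemLp u 6 := by
    simpa using hsol.u_D012.memLp_six (by simpa using hsol.aemeas_u.aestronglyMeasurable)
  have hdu : MemLp du 2 := by simpa using hsol.u_D012.2.2.1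
  have sobolevConjugate : (ENNReal.ofReal (6 / 5)).HolderConjugate (6 : ℝ≥0) := by
    simpa using Real.HolderConjugate.ennrealOfReal (p := 6 / 5) (q := 6)
      (Real.holderConjugate_iff.2 (by norm_num))
  exact memLp_two_mul_of_integral_inner_outer_add_rpow_mul_laplacian (s := 6) (by norm_num) hγ3 hγ6
    (by simpa using! hsol.ρ_nonneg) hρ (memLp_toLp hu) (memLp_toLp (memLp_Smat μ η hdu))
    (memLp_toLp (memLp_smul_six_fifths (by linarith) hρ hdG)) fun ψ hψ => hsol.momentum_gradient hψ

end WeakSolutions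

/-- **Corollary.** Let `(ρ, u)` be a weak solution of the stationary isentropic system on `ℝ³`
with `3 ≤ γ < 6` and `G ∈ D₀^{1, 6γ/(5γ−6)}(ℝ³)`. If `ρ ∈ L^γ(ℝ³)`, then
`ρ ∈ L^{2γ}(ℝ³)`. -/
theorem higher_integrability_Lgamma
    (μ η γ : ℝ) (hμ : 0 < μ) (hη : 0 ≤ η) (hγ1 : 3 ≤ γ) (hγ2 : γ < 6)
    (G : E3 → ℝ) (dG : E3 → Fin 3 → ℝ)
    (ρ : E3 → ℝ) (u : E3 → Fin 3 → ℝ) (du : E3 → Fin 3 → Fin 3 → ℝ)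
    (hG : MemD01q univ G dG (6 * γ / (5 * γ - 6)))
    (hsol : IsentropicWeakSolution μ η γ G dG ρ u du)
    (hργ : MemLp ρ (ENNReal.ofReal γ) volume) :
    MemLp ρ (ENNReal.ofReal (2 * γ)) volume :=
  higher_integrability_Lgamma_general hγ1 hγ2.le (by simpa using hG.2.1) hsol hργ
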